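/- arXiv:2009.06262 — 5 statements merged into one kernel-verified Lean document; each statement's English description precedes it below -/
import Mathlib

section
/- Let n ≥ 3 be an integer and let β₁, β₂ ∈ (1, n) be real numbers such that 1/β₁ + 1/β₂ − 2/(n−2) > 0. Then there exists a real γ > 0 such that for every ε ∈ (0, 1) and all real numbers λ₁, λ₂ with λ₁ > 1/ε and λ₂ > 1/ε, one has (λ₁ λ₂)^{−(n−2)/2} ≤ ε^γ · (λ₁^{−β₁} + λ₂^{−β₂}). -/
/-- Logarithmic form of the estimate, in the case `b₁ x ≤ b₂ y`. -/
theorem interaction_log (m b₁ b₂ x y L : ℝ) (hm : 0 < m) (h1 : 1 < b₁) (h2 : 1 < b₂)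
    (hd : 0 < m * (1 / b₁ + 1 / b₂) - 1) (hL : 0 < L) (hx : L < x) (hxy : b₁ * x ≤ b₂ * y) :
    b₁ * x + (m * (1 / b₁ + 1 / b₂) - 1) * L ≤ m * (x + y) := by
  have hy : b₁ * x * (1 / b₂) ≤ y := by
    rw [mul_one_div, div_le_iff₀ (by linarith)]
    linarith
  have hx' : b₁ * x * (1 / b₁) = x := by
    field_simp
  have hM : L ≤ b₁ * x := by nlinarith
  have e1 := mul_le_mul_of_nonneg_left hM hd.le
  have e2 := mul_le_mul_of_nonneg_left hy hm.le
  have e3 : m * (b₁ * x * (1 / b₁)) = m * x := by rw [hx']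
  nlinarith

/-- Lemma 3.2 (interaction estimate): if `1/β₁ + 1/β₂ > 2/(n-2)` then the mutual
interaction `(λ₁λ₂)^{-(n-2)/2}` is `o(λ₁^{-β₁} + λ₂^{-β₂})`. -/
theorem stmt_0 (n : ℕ) (hn : 3 ≤ n) (β₁ β₂ : ℝ)
    (hβ₁ : β₁ ∈ Set.Ioo 1 (n : ℝ)) (hβ₂ : β₂ ∈ Set.Ioo 1 (n : ℝ))
    (hbal : 0 < 1 / β₁ + 1 / β₂ - 2 / ((n : ℝ) - 2)) :
    ∃ γ : ℝ, 0 < γ ∧ ∀ ε ∈ Set.Ioo (0 : ℝ) 1, ∀ l₁ l₂ : ℝ,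
      1 / ε < l₁ → 1 / ε < l₂ →
      (l₁ * l₂) ^ (-((n : ℝ) - 2) / 2) ≤ ε ^ γ * (l₁ ^ (-β₁) + l₂ ^ (-β₂)) := by
  obtain ⟨h1, -⟩ := hβ₁
  obtain ⟨h2, -⟩ := hβ₂
  have hn' : (3 : ℝ) ≤ n := by exact_mod_cast hn
  obtain ⟨m, hm⟩ : ∃ m : ℝ, m = ((n : ℝ) - 2) / 2 := ⟨_, rfl⟩
  have hm0 : 0 < m := by rw [hm]; linarith
  have hmm : m * (2 / ((n : ℝ) - 2)) = 1 := by
    have : (n : ℝ) - 2 ≠ 0 := by linarith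
    rw [hm]; field_simp
  have hd : 0 < m * (1 / β₁ + 1 / β₂) - 1 := by
    have := mul_pos hm0 hbal
    rw [mul_sub, hmm] at this
    exact this
  have hexp : -((n : ℝ) - 2) / 2 = -m := by rw [hm]; ring
  refine ⟨m * (1 / β₁ + 1 / β₂) - 1, hd, ?_⟩
  rintro ε ⟨hε, hε1⟩ l₁ l₂ hl₁ hl₂
  have hi : 0 < 1 / ε := by positivity
  have p1 : 0 < l₁ := hi.trans hl₁
  have p2 : 0 < l₂ := hi.trans hl₂
  have hL : 0 < -Real.log ε := by
    have := Real.log_neg hε hε1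
    linarith
  have hli : Real.log (1 / ε) = -Real.log ε := by rw [one_div, Real.log_inv]
  have hx : -Real.log ε < Real.log l₁ := hli ▸ Real.log_lt_log hi hl₁
  have hy : -Real.log ε < Real.log l₂ := hli ▸ Real.log_lt_log hi hl₂
  rw [hexp, Real.rpow_def_of_pos (mul_pos p1 p2), Real.log_mul p1.ne' p2.ne',
    Real.rpow_def_of_pos hε, Real.rpow_def_of_pos p1, Real.rpow_def_of_pos p2, mul_add,
    ← Real.exp_add, ← Real.exp_add]
  rcases le_total (β₁ * Real.log l₁) (β₂ * Real.log l₂) with h | h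
  · have key := interaction_log m β₁ β₂ _ _ _ hm0 h1 h2 hd hL hx h
    refine (Real.exp_le_exp.2 ?_).trans (le_add_of_nonneg_right (Real.exp_pos _).le)
    linarith
  · have key := interaction_log m β₂ β₁ _ _ _ hm0 h2 h1 (by rwa [add_comm (1 / β₂)]) hL hy h
    rw [add_comm (1 / β₂)] at key
    refine (Real.exp_le_exp.2 ?_).trans (le_add_of_nonneg_left (Real.exp_pos _).le)
    linarith
end

section
/- Let n ≥ 3 be an integer and let β₁, β₂ ∈ (1, n) be real numbers such that 1/β₁ + 1/β₂ − 2/(n−2) < 0, and set κ = 2β₁β₂/(n−2) − β₁ − β₂ (which is then positive). Let M ≥ 1 and let γ be any real with 0 < γ < (n−2)κ/(2β₂). Then there exists ε₀ ∈ (0, 1) such that for every ε ∈ (0, ε₀) and all real numbers λ₁, λ₂ with λ₁ > 1/ε, λ₂ > 1/ε and λ₂^{β₂} ≤ M λ₁^{β₁}, one has (λ₁ λ₂)^{(n−2)/2} ≤ ε^γ λ₁^{β₁}; equivalently λ₁^{−β₁} ≤ ε^γ (λ₁ λ₂)^{−(n−2)/2}. -/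
/-- Lemma 3.6 together with inequality (3.10): if `1/β₁ + 1/β₂ < 2/(n-2)` and the
weighted concentrations are comparable, the self-interaction `λ₁^{-β₁}` is negligible
compared with the mutual interaction `(λ₁λ₂)^{-(n-2)/2}`. -/
theorem stmt_1 (n : ℕ) (hn : 3 ≤ n) (β₁ β₂ : ℝ)
    (hβ₁ : β₁ ∈ Set.Ioo 1 (n : ℝ)) (hβ₂ : β₂ ∈ Set.Ioo 1 (n : ℝ))
    (hbal : 1 / β₁ + 1 / β₂ - 2 / ((n : ℝ) - 2) < 0)
    (κ : ℝ) (hκ : κ = 2 * β₁ * β₂ / ((n : ℝ) - 2) - β₁ - β₂)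
    (M : ℝ) (hM : 1 ≤ M)
    (γ : ℝ) (hγ : 0 < γ) (hγ' : γ < ((n : ℝ) - 2) * κ / (2 * β₂)) :
    ∃ ε₀ ∈ Set.Ioo (0 : ℝ) 1, ∀ ε ∈ Set.Ioo (0 : ℝ) ε₀, ∀ l₁ l₂ : ℝ,
      1 / ε < l₁ → 1 / ε < l₂ → l₂ ^ β₂ ≤ M * l₁ ^ β₁ →
      (l₁ * l₂) ^ (((n : ℝ) - 2) / 2) ≤ ε ^ γ * l₁ ^ β₁ ∧
      l₁ ^ (-β₁) ≤ ε ^ γ * (l₁ * l₂) ^ (-((n : ℝ) - 2) / 2) := by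
  obtain ⟨hb1, _⟩ := hβ₁
  obtain ⟨hb2, _⟩ := hβ₂
  have hn' : (3 : ℝ) ≤ n := by exact_mod_cast hn
  have hb20 : 0 < β₂ := by linarith
  obtain ⟨p, hp⟩ : ∃ p : ℝ, p = ((n : ℝ) - 2) / 2 := ⟨_, rfl⟩
  have hnp : (n : ℝ) - 2 = 2 * p := by linarith
  have hp0 : 0 < p := by linarith
  obtain ⟨δ, hδ⟩ : ∃ δ : ℝ, δ = ((n : ℝ) - 2) * κ / (2 * β₂) := ⟨_, rfl⟩
  have hδ2 : δ * β₂ = β₁ * β₂ - p * β₂ - p * β₁ := by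
    rw [hδ, hκ, hnp]
    field_simp
    ring
  rw [← hδ] at hγ'
  have hm : 0 ≤ Real.log M := Real.log_nonneg hM
  have hd : 0 < β₂ * (δ - γ) := mul_pos hb20 (by linarith)
  obtain ⟨A, hA⟩ : ∃ A : ℝ, A = p * Real.log M / (β₂ * (δ - γ)) := ⟨_, rfl⟩
  have hA0 : 0 ≤ A := by rw [hA]; positivity
  have hA1 : A * (β₂ * (δ - γ)) = p * Real.log M := by
    rw [hA]; exact div_mul_cancel₀ _ hd.ne'
  refine ⟨Real.exp (-(A + 1)), ⟨Real.exp_pos _, by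
    rw [Real.exp_lt_one_iff]; linarith⟩, ?_⟩
  rintro ε ⟨he, he'⟩ l₁ l₂ h1 h2 h
  have hi : 0 < 1 / ε := by positivity
  have hl1 : 0 < l₁ := hi.trans h1
  have hl2 : 0 < l₂ := hi.trans h2
  have hL : Real.log ε < -(A + 1) := (Real.log_lt_iff_lt_exp he).2 he'
  have hx : -Real.log ε < Real.log l₁ := by
    have := Real.log_lt_log hi h1
    rwa [one_div, Real.log_inv] at this
  have hy : β₂ * Real.log l₂ ≤ Real.log M + β₁ * Real.log l₁ := by
    have := Real.log_le_log (by positivity) h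
    rwa [Real.log_mul (by positivity) (by positivity), Real.log_rpow hl2,
      Real.log_rpow hl1] at this
  have key : p * (Real.log l₁ + Real.log l₂) ≤ γ * Real.log ε + β₁ * Real.log l₁ := by
    have e1 := mul_le_mul_of_nonneg_left hy hp0.le
    have e2 : (β₂ * (δ - γ)) * A ≤ (β₂ * (δ - γ)) * (-Real.log ε) :=
      mul_le_mul_of_nonneg_left (by linarith) hd.le
    have e3 : (β₂ * δ) * (-Real.log ε) ≤ (β₂ * δ) * Real.log l₁ :=
      mul_le_mul_of_nonneg_left hx.le (mul_nonneg hb20.le (by linarith))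
    have e4 : δ * β₂ * Real.log l₁ = (β₁ * β₂ - p * β₂ - p * β₁) * Real.log l₁ := by rw [hδ2]
    refine le_of_mul_le_mul_left ?_ hb20
    linarith
  rw [neg_div, ← hp]
  have hll : 0 < l₁ * l₂ := mul_pos hl1 hl2
  have main : (l₁ * l₂) ^ p ≤ ε ^ γ * l₁ ^ β₁ := by
    rw [← Real.log_le_log_iff (by positivity) (by positivity),
      Real.log_mul (by positivity) (by positivity), Real.log_rpow hll, Real.log_rpow he,
      Real.log_rpow hl1, Real.log_mul hl1.ne' hl2.ne']
    exact key
  refine ⟨main, ?_⟩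
  rw [Real.rpow_neg hl1.le, Real.rpow_neg hll.le, ← div_eq_mul_inv,
    le_div_iff₀ (by positivity), inv_mul_le_iff₀ (by positivity), mul_comm (l₁ ^ β₁)]
  exact main
end

section
/- Let n ≥ 3 be an integer and t₀ > 0. For all real numbers λ, μ ≥ √(8/t₀) and all t ≥ t₀, the function f(μ) = (λ/μ + μ/λ + λμt/2)^{−(n−2)/2} satisfies μ f′(μ) ≤ −((n−2)/4) · (λ/μ + μ/λ + λμt/2)^{−(n−2)/2}. -/
/-- Estimate (eq1.2): when the concentration points stay a fixed distance apart
(`t ≥ t₀`) and the concentrations are large, `μ ∂ε/∂μ ≤ -((n-2)/4) ε`. -/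
theorem stmt_10 (n : ℕ) (hn : 3 ≤ n) (t₀ : ℝ) (ht₀ : 0 < t₀)
    (l μ t : ℝ) (hl : Real.sqrt (8 / t₀) ≤ l) (hμ : Real.sqrt (8 / t₀) ≤ μ)
    (ht : t₀ ≤ t) :
    μ * deriv (fun x : ℝ => (l / x + x / l + l * x * t / 2) ^ (-((n : ℝ) - 2) / 2)) μ
      ≤ -(((n : ℝ) - 2) / 4) * (l / μ + μ / l + l * μ * t / 2) ^ (-((n : ℝ) - 2) / 2) := by
  have hs : 0 < Real.sqrt (8 / t₀) := Real.sqrt_pos.mpr (by positivity)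
  have hl0 : 0 < l := lt_of_lt_of_le hs hl
  have hm0 : 0 < μ := lt_of_lt_of_le hs hμ
  have ht0 : 0 < t := lt_of_lt_of_le ht₀ ht
  have h8 : 8 ≤ μ ^ 2 * t := by
    have h1 : 8 / t₀ ≤ μ ^ 2 := (Real.sqrt_le_left hm0.le).mp hμ
    rw [div_le_iff₀ ht₀] at h1
    nlinarith [sq_nonneg μ]
  have hn' : (3 : ℝ) ≤ n := by exact_mod_cast hn
  set A : ℝ := l / μ + μ / l + l * μ * t / 2 with hA
  have hA0 : 0 < A := by positivity
  have hd : HasDerivAt (fun x : ℝ => l / x + x / l + l * x * t / 2)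
      (-l / μ ^ 2 + 1 / l + l * t / 2) μ := by
    have h1 : HasDerivAt (fun x : ℝ => l / x) (-l / μ ^ 2) μ := by
      have := (hasDerivAt_inv hm0.ne').const_mul l
      have e : l * -(μ ^ 2)⁻¹ = -l / μ ^ 2 := by
        rw [div_eq_mul_inv]; ring
      rw [e] at this
      exact this
    have h2 : HasDerivAt (fun x : ℝ => x / l) (1 / l) μ := (hasDerivAt_id μ).div_const l
    have h3 : HasDerivAt (fun x : ℝ => l * x * t / 2) (l * t / 2) μ := by
      have := (((hasDerivAt_id μ).const_mul l).mul_const t).div_const 2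
      simpa using this
    exact (h1.add h2).add h3
  have hf := hd.rpow_const (p := -((n : ℝ) - 2) / 2) (Or.inl hA0.ne')
  rw [hf.deriv, ← hA, Real.rpow_sub_one hA0.ne']
  have hkey : A / 2 ≤ μ * (-l / μ ^ 2 + 1 / l + l * t / 2) := by
    have e : μ * (-l / μ ^ 2 + 1 / l + l * t / 2) = A - 2 * (l / μ) := by
      rw [hA]; field_simp; ring
    have h4 : l * μ * t / 2 = l / μ * (μ ^ 2 * t) / 2 := by field_simp
    have h5 : 0 < l / μ := by positivity
    have h6 : 0 < μ / l := by positivity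
    have h7 : l / μ * 8 ≤ l / μ * (μ ^ 2 * t) := by gcongr
    rw [e]
    linarith
  have hP : 0 < A ^ (-((n : ℝ) - 2) / 2) := Real.rpow_pos_of_pos hA0 _
  generalize A ^ (-((n : ℝ) - 2) / 2) = P at hP
  generalize -l / μ ^ 2 + 1 / l + l * t / 2 = D at hkey
  have hc : 0 ≤ ((n : ℝ) - 2) / 2 * (P / A) := 
    mul_nonneg (by linarith) (by positivity)
  have h9 := mul_le_mul_of_nonneg_left hkey hc
  have e1 : ((n : ℝ) - 2) / 2 * (P / A) * (A / 2) = ((n : ℝ) - 2) / 4 * P := by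
    field_simp; ring
  rw [e1] at h9
  have e2 : μ * (D * (-((n : ℝ) - 2) / 2) * (P / A))
      = -(((n : ℝ) - 2) / 2 * (P / A) * (μ * D)) := by ring
  rw [e2]
  linarith
end

section
/- Let n ≥ 3 be an integer. For all real numbers λ, μ > 0 with λ/2 ≤ μ ≤ 2λ and all t ≥ 0 such that λ/μ + μ/λ + λμt/2 ≥ 10, the function f(μ) = (λ/μ + μ/λ + λμt/2)^{−(n−2)/2} satisfies μ f′(μ) ≤ −((n−2)/4) · (λ/μ + μ/λ + λμt/2)^{−(n−2)/2}. -/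
/-- Estimate (eq1.3): when the two concentrations are of the same order and the
interaction is small, `μ ∂ε/∂μ ≤ -((n-2)/4) ε`. -/
theorem stmt_11 (n : ℕ) (hn : 3 ≤ n) (l μ t : ℝ) (hl : 0 < l) (hμ : 0 < μ)
    (h1 : l / 2 ≤ μ) (h2 : μ ≤ 2 * l) (ht : 0 ≤ t)
    (hbig : 10 ≤ l / μ + μ / l + l * μ * t / 2) :
    μ * deriv (fun x : ℝ => (l / x + x / l + l * x * t / 2) ^ (-((n : ℝ) - 2) / 2)) μ
      ≤ -(((n : ℝ) - 2) / 4) * (l / μ + μ / l + l * μ * t / 2) ^ (-((n : ℝ) - 2) / 2) := by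
  have hB : 0 < l / μ + μ / l + l * μ * t / 2 := by linarith
  have hd1 : HasDerivAt (fun x : ℝ => l / x + x / l + l * x * t / 2)
      (-l / μ ^ 2 + 1 / l + l * t / 2) μ := by
    have a1 : HasDerivAt (fun x : ℝ => l / x) (-l / μ ^ 2) μ := by
      have := (hasDerivAt_inv hμ.ne').const_mul l
      have h3 : l * (-(μ ^ 2)⁻¹) = -l / μ ^ 2 := by ring
      rw [h3] at this
      simpa only [div_eq_mul_inv] using this
    have a2 : HasDerivAt (fun x : ℝ => x / l) (1 / l) μ := (hasDerivAt_id μ).div_const l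
    have a3 : HasDerivAt (fun x : ℝ => l * x * t / 2) (l * t / 2) μ := by
      have := ((((hasDerivAt_id μ).const_mul l).mul_const t).div_const 2)
      simpa using this
    exact (a1.add a2).add a3
  have hd := hd1.rpow_const (p := -((n : ℝ) - 2) / 2) (Or.inl hB.ne')
  rw [hd.deriv, Real.rpow_sub_one hB.ne']
  have hlm : l / μ ≤ 2 := by rw [div_le_iff₀ hμ]; linarith
  have hD : μ * (-l / μ ^ 2 + 1 / l + l * t / 2)
      = (l / μ + μ / l + l * μ * t / 2) - 2 * (l / μ) := by
    field_simp
    ring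
  have hn' : (3 : ℝ) ≤ n := by exact_mod_cast hn
  generalize (-l / μ ^ 2 + 1 / l + l * t / 2) = D at *
  generalize l / μ + μ / l + l * μ * t / 2 = B at *
  have hP : 0 < B ^ (-((n : ℝ) - 2) / 2) := Real.rpow_pos_of_pos hB _
  generalize B ^ (-((n : ℝ) - 2) / 2) = P at *
  have hq : 1 / 2 ≤ μ * D / B := by
    rw [le_div_iff₀ hB]; linarith
  have hk : 0 ≤ ((n : ℝ) - 2) / 2 * P := mul_nonneg (by linarith) hP.le
  have := mul_le_mul_of_nonneg_left hq hk
  have e : μ * (D * (-((n : ℝ) - 2) / 2) * (P / B))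
      = -(((n : ℝ) - 2) / 2 * P * (μ * D / B)) := by ring
  rw [e]
  linarith
end

section
/- Let n ≥ 3 be an integer. For all real numbers λ, μ > 0 with μ ≥ 2λ and all t ≥ 0, the function f(μ) = (λ/μ + μ/λ + λμt/2)^{−(n−2)/2} satisfies μ f′(μ) ≤ −(3(n−2)/10) · (λ/μ + μ/λ + λμt/2)^{−(n−2)/2}. -/
/-- Core of estimate (eq1.4): when `μ ≥ 2λ`, `μ ∂ε/∂μ ≤ -(3(n-2)/10) ε`. -/
theorem stmt_12 (n : ℕ) (hn : 3 ≤ n) (l μ t : ℝ) (hl : 0 < l) (hμ : 0 < μ)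
    (h : 2 * l ≤ μ) (ht : 0 ≤ t) :
    μ * deriv (fun x : ℝ => (l / x + x / l + l * x * t / 2) ^ (-((n : ℝ) - 2) / 2)) μ
      ≤ -(3 * ((n : ℝ) - 2) / 10) * (l / μ + μ / l + l * μ * t / 2) ^ (-((n : ℝ) - 2) / 2) := by
  have hn' : (3 : ℝ) ≤ n := by exact_mod_cast hn
  have hG : 0 < l / μ + μ / l + l * μ * t / 2 := by positivity
  have hd : HasDerivAt (fun x : ℝ => l / x + x / l + l * x * t / 2)
      (-l / μ ^ 2 + 1 / l + l * t / 2) μ := by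
    have h1 : HasDerivAt (fun x : ℝ => l / x) (-l / μ ^ 2) μ := by
      have h0 := (hasDerivAt_inv hμ.ne').const_mul l
      have e : l * -(μ ^ 2)⁻¹ = -l / μ ^ 2 := by ring
      rw [e] at h0
      simpa only [div_eq_mul_inv] using h0
    have h2 : HasDerivAt (fun x : ℝ => x / l) (1 / l) μ := (hasDerivAt_id' μ).div_const l
    have h3 : HasDerivAt (fun x : ℝ => l * x * t / 2) (l * t / 2) μ := by
      simpa using (((hasDerivAt_id' μ).const_mul l).mul_const t).div_const 2
    exact (h1.add h2).add h3
  rw [(hd.rpow_const (p := -((n : ℝ) - 2) / 2) (Or.inl hG.ne')).deriv]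
  have hb : 4 * (l / μ) ≤ μ / l := by
    rw [← mul_div_assoc, div_le_div_iff₀ hμ hl]
    nlinarith
  have hc : 0 ≤ l * μ * t / 2 := by positivity
  have hmul : μ * (-l / μ ^ 2 + 1 / l + l * t / 2) = -(l / μ) + μ / l + l * μ * t / 2 := by
    field_simp
  have hP : (l / μ + μ / l + l * μ * t / 2) ^ (-((n : ℝ) - 2) / 2) =
      (l / μ + μ / l + l * μ * t / 2) ^ (-((n : ℝ) - 2) / 2 - 1)
        * (l / μ + μ / l + l * μ * t / 2) := by
    rw [Real.rpow_sub_one hG.ne']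
    field_simp
  have hQ : 0 < (l / μ + μ / l + l * μ * t / 2) ^ (-((n : ℝ) - 2) / 2 - 1) :=
    Real.rpow_pos_of_pos hG _
  rw [hP]
  generalize (l / μ + μ / l + l * μ * t / 2) ^ (-((n : ℝ) - 2) / 2 - 1) = Q at hQ ⊢
  rw [← mul_assoc, ← mul_assoc, hmul]
  generalize l / μ = a at *
  generalize μ / l = b at *
  generalize l * μ * t / 2 = c at *
  have key : 0 ≤ Q * ((n : ℝ) - 2) * (b - 4 * a + c) :=
    mul_nonneg (mul_nonneg hQ.le (by linarith)) (by linarith)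
  nlinarith [key]
end
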